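/- Let n be an odd prime and a, b integers with 1 ≤ a, b ≤ n-1. Then for any integer m with 1 ≤ m < n, |Σ_{k=1}^{n} sign(cos(2πak/n)) sign(cos(2πbk/n))| ≤ (2/(m+2) + Σ_{ℓ=1}^{m} 12/(ℓ·‖ℓ a⁻¹ b‖)) · n + C, for an absolute constant C. -/

import Mathlib

open Real Finset

/-- `sign(x) = 1` if `x ≥ 0` and `-1` otherwise. -/
noncomputable def sgn (x : ℝ) : ℝ := if 0 ≤ x then 1 else -1

/-- Toroidal distance of `x` to `0` in `ℤ/nℤ`: `min (x mod n) (n - x mod n)`. -/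
def tdist (n x : ℕ) : ℕ := min (x % n) (n - x % n)

/-!
Since `a` is invertible modulo `n`, replacing `k` by `a⁻¹k` turns the pair `(a, b)` into `(1, N)`
with `N ≡ a⁻¹b`. The second square wave is then approximated by a trigonometric polynomial: if `P`
is a nonnegative (Fejér) polynomial and `W` the primitive of `cos θ P(θ)` vanishing at `0`, then
`W(θ + π / 2)` is close to `Z sign (cos θ)`, where `Z = W(π / 2)`. At distance `u ≤ π / 2` from the
nearest jump the error is exactly the tail `∫ cos t P(t) dt` over `u < t ≤ π / 2`, so by counting
grid points its sum over an equally spaced grid is controlled by the first moment of `cos t P(t)`.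
Fejér's extremal weights of length `d` make that moment at most `π Z / (2 (d + 1))`, for a total
error of at most `(n / (d + 1) + 2) Z`.

The polynomial `W` contains only the odd frequencies `ℓ = 2r + 1 < 2d`, with coefficients
`O(Z / ℓ)`. The sum of `sign (cos (2πk / n)) sin (2πℓNk / n + φ)` over a period is twice a geometric
sum over the arc on which the cosine is negative, hence at most `n / ‖ℓN‖`.
-/

theorem sum_sum_range_of_symm {R : Type*} [CommRing R] {f : ℕ → ℕ → R}
    (hf : ∀ i j, f i j = f j i) (d : ℕ) :
    ∑ i ∈ range d, ∑ j ∈ range d, f i j =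
      2 * ∑ r ∈ range d, ∑ i ∈ range (d - r), f i (i + r) - ∑ i ∈ range d, f i i := by
  have by_diagonals : ∑ r ∈ range d, ∑ i ∈ range (d - r), f i (i + r) =
      ∑ j ∈ range d, ∑ i ∈ range (j + 1), f i j := by
    rw [← sum_range_diag_flip d fun r i ↦ f i (i + r)]
    refine sum_congr rfl fun j _ ↦ ?_
    rw [← sum_flip fun i ↦ f i j]
    refine sum_congr rfl fun k hk ↦ ?_
    rw [Nat.sub_add_cancel (mem_range_succ_iff.1 hk)]
  rw [by_diagonals]
  clear by_diagonals
  induction d with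
  | zero => simp
  | succ d ih =>
    simp only [sum_range_succ, sum_add_distrib] at ih ⊢
    rw [ih, sum_congr rfl fun j _ ↦ hf d j]
    ring

theorem sum_Ico_mul_of_periodic {M : Type*} [AddCommMonoid M] {n a : ℕ} {g : ℕ → M}
    (hg : Function.Periodic g n) (ha : a.Coprime n) (m : ℕ) :
    ∑ k ∈ Ico m (m + n), g (a * k) = ∑ k ∈ range n, g k := by
  rcases n.eq_zero_or_pos with rfl | hn
  · simp
  have inj : Set.InjOn (fun k ↦ a * k % n) (Ico m (m + n)) := fun k hk l hl h ↦
    Nat.mod_injOn_Ico m n (by simpa using hk) (by simpa using hl)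
      (Nat.ModEq.cancel_left_of_coprime ha.symm h)
  have image : (Ico m (m + n)).image (fun k ↦ a * k % n) = range n :=
    eq_of_subset_of_card_le
      (image_subset_iff.2 fun k _ ↦ mem_range.2 (Nat.mod_lt _ hn))
      (by rw [card_image_of_injOn inj, Nat.card_Ico, card_range, Nat.add_sub_cancel_left])
  rw [← image, sum_image inj]
  exact sum_congr rfl fun k _ ↦ (hg.map_mod_nat _).symm

theorem sum_range_odd_le {M : Type*} [AddCommMonoid M] [PartialOrder M] [IsOrderedAddMonoid M]
    {F : ℕ → M} (hF : ∀ ℓ, 0 ≤ F ℓ) {d m : ℕ} (hd : 2 * d ≤ m + 1) :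
    ∑ r ∈ range d, F (2 * r + 1) ≤ ∑ ℓ ∈ Icc 1 m, F ℓ := by
  have inj : Set.InjOn (fun r ↦ 2 * r + 1) (range d) := fun r _ s _ h ↦ by grind
  rw [← sum_image (g := fun r ↦ 2 * r + 1) inj]
  refine sum_le_sum_of_subset_of_nonneg (fun ℓ hℓ ↦ ?_) fun ℓ _ _ ↦ hF ℓ
  obtain ⟨r, hr, rfl⟩ := mem_image.1 hℓ
  grind

theorem card_filter_abs_mul_sub_lt_le {h t : ℝ} (hh : 0 < h) (ht : 0 ≤ t) (n : ℕ) (β : ℝ) :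
    (#{k ∈ range n | |h * (k : ℕ) - β| < t} : ℝ) ≤ 2 * t / h + 1 := by
  set lo := ⌈(β - t) / h⌉
  set hi := ⌊(β + t) / h⌋
  have card_le : #{k ∈ range n | |h * (k : ℕ) - β| < t} ≤ #(Icc lo hi) := by
    refine card_le_card_of_injOn (fun k : ℕ ↦ (k : ℤ)) (fun k hk ↦ ?_) Nat.cast_injective.injOn
    have hk := abs_lt.1 (mem_filter.1 hk).2
    simp only [coe_Icc, Set.mem_Icc, lo, hi, Int.ceil_le, Int.le_floor, Int.cast_natCast,
      div_le_iff₀ hh, le_div_iff₀ hh]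
    constructor <;> linarith
  have toNat_le : (#(Icc lo hi) : ℝ) ≤ (max (hi + 1 - lo) 0 : ℤ) := by
    rw [Int.card_Icc]
    exact_mod_cast (Int.toNat_eq_max _).le
  have width : (β + t) / h - (β - t) / h = 2 * t / h := by ring
  calc (#{k ∈ range n | |h * (k : ℕ) - β| < t} : ℝ) ≤ #(Icc lo hi) := by exact_mod_cast card_le
    _ ≤ (max (hi + 1 - lo) 0 : ℤ) := toNat_le
    _ ≤ 2 * t / h + 1 := by
        push_cast
        exact max_le (by linarith [Int.floor_le ((β + t) / h), Int.le_ceil ((β - t) / h)])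
          (by positivity)

theorem sum_setIntegral_Ioc_abs_mul_sub_le {f : ℝ → ℝ} {L h : ℝ} (hL : 0 ≤ L) (hh : 0 < h)
    (hf : IntervalIntegrable f MeasureTheory.volume 0 L) (hf₀ : ∀ t ∈ Set.Ioc 0 L, 0 ≤ f t)
    (n : ℕ) (β : ℝ) :
    ∑ k ∈ range n, ∫ t in Set.Ioc |h * k - β| L, f t ≤ ∫ t in 0..L, (2 * t / h + 1) * f t := by
  have hf' : MeasureTheory.IntegrableOn f (Set.Ioc 0 L) :=
    (intervalIntegrable_iff_integrableOn_Ioc_of_le hL).1 hf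
  have integrable_tail : ∀ k : ℕ, MeasureTheory.IntegrableOn ((Set.Ioi |h * k - β|).indicator f)
      (Set.Ioc 0 L) := fun k ↦ hf'.indicator measurableSet_Ioi
  have tail_eq : ∀ k : ℕ, ∫ t in Set.Ioc |h * k - β| L, f t =
      ∫ t in Set.Ioc 0 L, (Set.Ioi |h * k - β|).indicator f t := fun k ↦ by
    rw [MeasureTheory.setIntegral_indicator measurableSet_Ioi, Set.Ioc_inter_Ioi,
      sup_eq_right.2 (abs_nonneg _)]
  have hbound : MeasureTheory.IntegrableOn (fun t ↦ (2 * t / h + 1) * f t) (Set.Ioc 0 L) :=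
    (intervalIntegrable_iff_integrableOn_Ioc_of_le hL).1 (hf.continuousOn_mul (by fun_prop))
  simp only [tail_eq]
  rw [intervalIntegral.integral_of_le hL,
    ← MeasureTheory.integral_finsetSum _ fun k _ ↦ integrable_tail k]
  refine MeasureTheory.setIntegral_mono_on
    (MeasureTheory.integrable_finsetSum _ fun k _ ↦ integrable_tail k) hbound measurableSet_Ioc
      fun t ht ↦ ?_
  calc ∑ k ∈ range n, (Set.Ioi |h * (k : ℕ) - β|).indicator f t
      = #{k ∈ range n | |h * (k : ℕ) - β| < t} * f t := by
        simp only [Set.indicator_apply, Set.mem_Ioi, ← sum_filter, sum_const, nsmul_eq_mul]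
    _ ≤ (2 * t / h + 1) * f t := by
        gcongr
        exacts [hf₀ t ht, card_filter_abs_mul_sub_lt_le hh ht.1.le n β]

/-! ### Fejér polynomials and the square wave -/

/-- The autocorrelation `A_r = ∑_{0 ≤ i < d - r} c_i c_{i+r}` of the sequence `c_0, …, c_{d-1}`. -/
noncomputable def autocorr (c : ℕ → ℝ) (d r : ℕ) : ℝ := ∑ i ∈ range (d - r), c i * c (i + r)

/-- The Fejér polynomial `|∑_{i < d} c_i e^{2iIθ}|²` (with `I² = -1`), written as the cosine
polynomial `A_0 + 2 ∑_{0 < r < d} A_r cos (2rθ)` in the autocorrelations of `c`; the sum below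
includes `r = 0`, whence the subtraction. -/
noncomputable def fejerPoly (c : ℕ → ℝ) (d : ℕ) (θ : ℝ) : ℝ :=
  2 * ∑ r ∈ range d, autocorr c d r * cos (2 * r * θ) - autocorr c d 0

/-- The primitive of `cos θ * fejerPoly c d θ` vanishing at `0`, an odd sine polynomial which up to
the factor `squareWave c d (π / 2)` approximates the square wave `sgn (sin θ)`. -/
noncomputable def squareWave (c : ℕ → ℝ) (d : ℕ) (θ : ℝ) : ℝ :=
  ∑ r ∈ range d, (autocorr c d r + autocorr c d (r + 1)) * (sin ((2 * r + 1) * θ) / (2 * r + 1))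

section Fejer

variable (c : ℕ → ℝ) (d : ℕ)

variable {d} in
theorem autocorr_eq_zero {r : ℕ} (hr : d ≤ r) : autocorr c d r = 0 := by
  simp [autocorr, Nat.sub_eq_zero_of_le hr]

theorem autocorr_zero_right : autocorr c d 0 = ∑ i ∈ range d, c i ^ 2 := by
  simp [autocorr, sq]

theorem abs_autocorr_le (r : ℕ) : |autocorr c d r| ≤ autocorr c d 0 := by
  have head_le : ∑ i ∈ range (d - r), c i ^ 2 ≤ ∑ i ∈ range d, c i ^ 2 :=
    sum_le_sum_of_subset_of_nonneg (range_subset_range.2 (Nat.sub_le d r)) fun _ _ _ ↦ sq_nonneg _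
  have tail_le : ∑ i ∈ range (d - r), c (i + r) ^ 2 ≤ ∑ i ∈ range d, c i ^ 2 := by
    refine (sum_map (range (d - r)) (addRightEmbedding r) fun i ↦ c i ^ 2).symm.trans_le ?_
    refine sum_le_sum_of_subset_of_nonneg (fun i hi ↦ ?_) fun _ _ _ ↦ sq_nonneg _
    simp only [mem_map, mem_range, addRightEmbedding_apply] at hi ⊢
    omega
  have am_gm : ∀ x y : ℝ, |x * y| ≤ (x ^ 2 + y ^ 2) / 2 := fun x y ↦
    abs_le.2 ⟨by linarith [sq_nonneg (x + y)], by linarith [sq_nonneg (x - y)]⟩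
  calc |autocorr c d r| ≤ ∑ i ∈ range (d - r), (c i ^ 2 + c (i + r) ^ 2) / 2 :=
        (abs_sum_le_sum_abs _ _).trans (sum_le_sum fun i _ ↦ am_gm _ _)
    _ = (∑ i ∈ range (d - r), c i ^ 2 + ∑ i ∈ range (d - r), c (i + r) ^ 2) / 2 := by
        rw [← sum_div, sum_add_distrib]
    _ ≤ autocorr c d 0 := by
        rw [autocorr_zero_right]
        linarith

theorem fejerPoly_eq_sq_add_sq (θ : ℝ) :
    fejerPoly c d θ = (∑ i ∈ range d, c i * cos (2 * i * θ)) ^ 2 +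
      (∑ i ∈ range d, c i * sin (2 * i * θ)) ^ 2 := by
  have expand : (∑ i ∈ range d, c i * cos (2 * i * θ)) ^ 2 +
      (∑ i ∈ range d, c i * sin (2 * i * θ)) ^ 2 =
        ∑ i ∈ range d, ∑ j ∈ range d, c i * c j * cos (2 * j * θ - 2 * i * θ) := by
    simp only [sq, sum_mul_sum, ← sum_add_distrib, cos_sub]
    exact sum_congr rfl fun i _ ↦ sum_congr rfl fun j _ ↦ by ring
  have symm : ∀ i j : ℕ, c i * c j * cos (2 * j * θ - 2 * i * θ) =
      c j * c i * cos (2 * i * θ - 2 * j * θ) := fun i j ↦ by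
    rw [← cos_neg, neg_sub, mul_comm (c i)]
  rw [expand, sum_sum_range_of_symm symm, fejerPoly, autocorr_zero_right]
  congr 2
  · refine sum_congr rfl fun r _ ↦ ?_
    rw [autocorr, sum_mul]
    refine sum_congr rfl fun i _ ↦ ?_
    push_cast
    ring_nf
  · simp [sq]

theorem fejerPoly_nonneg (θ : ℝ) : 0 ≤ fejerPoly c d θ := by
  rw [fejerPoly_eq_sq_add_sq]
  positivity

@[fun_prop]
theorem continuous_fejerPoly : Continuous (fejerPoly c d) := by
  unfold fejerPoly
  fun_prop

theorem cos_mul_fejerPoly_nonneg {θ : ℝ} (h₀ : 0 ≤ θ) (h₁ : θ ≤ π / 2) :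
    0 ≤ cos θ * fejerPoly c d θ :=
  mul_nonneg (cos_nonneg_of_neg_pi_div_two_le_of_le (by linarith [pi_pos]) h₁)
    (fejerPoly_nonneg c d θ)

theorem cos_mul_fejerPoly (θ : ℝ) :
    cos θ * fejerPoly c d θ =
      ∑ r ∈ range d, (autocorr c d r + autocorr c d (r + 1)) * cos ((2 * r + 1) * θ) := by
  have shift : ∑ r ∈ range d, autocorr c d r * cos (2 * r * θ - θ) =
      ∑ r ∈ range d, autocorr c d (r + 1) * cos ((2 * r + 1) * θ) + autocorr c d 0 * cos θ := by
    have := sum_range_succ (fun r : ℕ ↦ autocorr c d r * cos (2 * r * θ - θ)) d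
    rw [sum_range_succ', autocorr_eq_zero c le_rfl, zero_mul, add_zero] at this
    rw [← this]
    push_cast
    congr 1
    · refine sum_congr rfl fun r _ ↦ ?_
      ring_nf
    · simp
  have product : cos θ * fejerPoly c d θ =
      ∑ r ∈ range d, autocorr c d r * cos ((2 * r + 1) * θ) +
        ∑ r ∈ range d, autocorr c d r * cos (2 * r * θ - θ) - autocorr c d 0 * cos θ := by
    rw [fejerPoly, mul_sub, mul_sum, mul_sum, ← sum_add_distrib, mul_comm (cos θ) (autocorr c d 0)]
    congr 1
    refine sum_congr rfl fun r _ ↦ ?_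
    rw [add_mul, one_mul, cos_add, cos_sub]
    ring
  simp only [product, shift, add_mul, sum_add_distrib]
  ring

theorem integral_cos_two_mul_int_mul (k : ℤ) :
    ∫ θ in (0 : ℝ)..(π / 2), cos (2 * k * θ) = if k = 0 then π / 2 else 0 := by
  split_ifs with hk
  · simp [hk]
  · have hk' : 2 * (k : ℝ) ≠ 0 := by positivity
    rw [intervalIntegral.integral_comp_mul_left cos hk', integral_cos,
      show 2 * (k : ℝ) * (π / 2) = k * π by ring, sin_int_mul_pi]
    simp

theorem integral_cos_mul_fejerPoly (k : ℕ) :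
    ∫ θ in (0 : ℝ)..(π / 2), cos (2 * k * θ) * fejerPoly c d θ = π / 2 * autocorr c d k := by
  have expand : ∀ θ : ℝ, cos (2 * k * θ) * fejerPoly c d θ =
      ∑ r ∈ range d, autocorr c d r *
        (cos (2 * (r - k : ℤ) * θ) + cos (2 * (r + k : ℤ) * θ)) -
        autocorr c d 0 * cos (2 * (k : ℤ) * θ) := fun θ ↦ by
    rw [fejerPoly, mul_sub, mul_sum, mul_sum]
    push_cast
    congr 1
    · refine sum_congr rfl fun r _ ↦ ?_
      rw [mul_sub 2, mul_add 2, sub_mul, add_mul, ← two_mul_cos_mul_cos]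
      ring
    · ring
  have integrable : ∀ k : ℤ, IntervalIntegrable (fun θ ↦ cos (2 * k * θ)) MeasureTheory.volume
      0 (π / 2) := fun k ↦ Continuous.intervalIntegrable (by fun_prop) _ _
  have pick : ∀ (l : ℕ) (x : ℝ),
      ∑ r ∈ range d, autocorr c d r * (if r = l then x else 0) = autocorr c d l * x := fun l x ↦ by
    simp only [mul_ite, mul_zero, sum_ite_eq', mem_range, ite_eq_left_iff, not_lt]
    exact fun hl ↦ by rw [autocorr_eq_zero c hl, zero_mul]
  have sub_eq_zero_iff : ∀ r : ℕ, (r - k : ℤ) = 0 ↔ r = k := fun r ↦ by omega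
  have add_eq_zero_iff : ∀ r : ℕ, (r + k : ℤ) = 0 ↔ r = 0 ∧ (k : ℤ) = 0 := fun r ↦ by omega
  simp only [expand]
  rw [intervalIntegral.integral_sub (Continuous.intervalIntegrable (by fun_prop) _ _)
      ((integrable k).const_mul _),
    intervalIntegral.integral_finsetSum
      fun r _ ↦ ((integrable _).add (integrable _)).const_mul _]
  simp only [intervalIntegral.integral_const_mul, integrable, intervalIntegral.integral_add,
    integral_cos_two_mul_int_mul]
  simp only [sub_eq_zero_iff, add_eq_zero_iff, ite_and, mul_add, sum_add_distrib, pick]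
  ring

theorem squareWave_antiperiodic : Function.Antiperiodic (squareWave c d) π := by
  intro θ
  rw [squareWave, squareWave, ← sum_neg_distrib]
  refine sum_congr rfl fun r _ ↦ ?_
  rw [show (2 * r + 1) * (θ + π) = (2 * r + 1) * θ + π + r * (2 * π) by ring,
    sin_add_nat_mul_two_pi, sin_add_pi]
  ring

theorem squareWave_neg (θ : ℝ) : squareWave c d (-θ) = -squareWave c d θ := by
  simp only [squareWave, mul_neg, sin_neg, neg_div, sum_neg_distrib]

theorem hasDerivAt_squareWave (θ : ℝ) :
    HasDerivAt (squareWave c d) (cos θ * fejerPoly c d θ) θ := by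
  rw [cos_mul_fejerPoly]
  refine HasDerivAt.fun_sum fun r _ ↦ HasDerivAt.const_mul _ ?_
  have linear : HasDerivAt (fun x : ℝ ↦ (2 * r + 1) * x) (2 * r + 1) θ :=
    hasDerivAt_const_mul _
  simpa [mul_div_cancel_right₀ _ (by positivity : (2 * r + 1 : ℝ) ≠ 0)] using
    linear.sin.div_const (2 * r + 1)

theorem integral_cos_mul_fejerPoly_eq_sub (s t : ℝ) :
    ∫ θ in s..t, cos θ * fejerPoly c d θ = squareWave c d t - squareWave c d s :=
  intervalIntegral.integral_eq_sub_of_hasDerivAt (fun θ _ ↦ hasDerivAt_squareWave c d θ)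
    (Continuous.intervalIntegrable (by fun_prop) _ _)

theorem integral_zero_pi_div_two_cos_mul_fejerPoly :
    ∫ θ in (0 : ℝ)..(π / 2), cos θ * fejerPoly c d θ = squareWave c d (π / 2) := by
  rw [integral_cos_mul_fejerPoly_eq_sub]
  simp [squareWave]

theorem pi_div_four_mul_le_squareWave :
    π / 4 * (autocorr c d 0 + autocorr c d 1) ≤ squareWave c d (π / 2) := by
  have h₀ := integral_cos_mul_fejerPoly c d 0
  have h₁ := integral_cos_mul_fejerPoly c d 1
  simp only [Nat.cast_zero, Nat.cast_one, mul_zero, mul_one, zero_mul, cos_zero, one_mul] at h₀ h₁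
  calc π / 4 * (autocorr c d 0 + autocorr c d 1)
      = ∫ θ in (0 : ℝ)..(π / 2), (fejerPoly c d θ + cos (2 * θ) * fejerPoly c d θ) / 2 := by
        rw [intervalIntegral.integral_div, intervalIntegral.integral_add
          (Continuous.intervalIntegrable (by fun_prop) _ _)
          (Continuous.intervalIntegrable (by fun_prop) _ _), h₀, h₁]
        ring
    _ ≤ ∫ θ in (0 : ℝ)..(π / 2), cos θ * fejerPoly c d θ := by
        refine intervalIntegral.integral_mono_on (by positivity)
          (Continuous.intervalIntegrable (by fun_prop) _ _)
          (Continuous.intervalIntegrable (by fun_prop) _ _) fun θ hθ ↦ ?_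
        have cos_mul_nonneg := mul_nonneg (cos_mul_fejerPoly_nonneg c d hθ.1 hθ.2)
          (sub_nonneg.2 (cos_le_one θ))
        rw [cos_two_mul]
        linarith
    _ = squareWave c d (π / 2) := integral_zero_pi_div_two_cos_mul_fejerPoly c d

variable {c d} in
theorem squareWave_sub_eq_setIntegral {s : ℝ} (hs : s ≤ π / 2) :
    squareWave c d (π / 2) - squareWave c d s =
      ∫ t in Set.Ioc s (π / 2), cos t * fejerPoly c d t := by
  rw [← integral_cos_mul_fejerPoly_eq_sub, intervalIntegral.integral_of_le hs]

theorem setIntegral_cos_mul_fejerPoly_nonneg {s : ℝ} (hs : 0 ≤ s) :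
    0 ≤ ∫ t in Set.Ioc s (π / 2), cos t * fejerPoly c d t :=
  MeasureTheory.setIntegral_nonneg measurableSet_Ioc fun _ ht ↦
    cos_mul_fejerPoly_nonneg c d (hs.trans ht.1.le) ht.2

variable {c d} in
theorem abs_mul_squareWave_sub_squareWave {u ε : ℝ} (hε : |ε| = 1) (hu : |u| ≤ π / 2)
    (h : ε * |u| = u) :
    |ε * squareWave c d (π / 2) - squareWave c d u| =
      ∫ t in Set.Ioc |u| (π / 2), cos t * fejerPoly c d t := by
  have odd : squareWave c d u = ε * squareWave c d |u| := by
    rcases eq_or_eq_neg_of_abs_eq hε with rfl | rfl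
    · rw [one_mul] at h ⊢
      rw [h]
    · rw [neg_one_mul] at h ⊢
      rw [← squareWave_neg, h]
  rw [odd, ← mul_sub, squareWave_sub_eq_setIntegral hu, abs_mul, hε, one_mul,
    abs_of_nonneg (setIntegral_cos_mul_fejerPoly_nonneg c d (abs_nonneg u))]

end Fejer

theorem abs_sgn (x : ℝ) : |sgn x| = 1 := by
  unfold sgn
  split_ifs <;> simp

theorem sgn_cos_eq_ite {θ : ℝ} (h₀ : 0 ≤ θ) (h₁ : θ ≤ 2 * π) :
    sgn (cos θ) = if π / 2 < θ ∧ θ < 3 * π / 2 then -1 else 1 := by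
  unfold sgn
  split_ifs with hcos hθ hθ
  · linarith [cos_neg_of_pi_div_two_lt_of_lt hθ.1 (by linarith)]
  · rfl
  · rfl
  · refine absurd ?_ hcos
    rcases not_and_or.1 hθ with hθ | hθ
    · exact cos_nonneg_of_neg_pi_div_two_le_of_le (by linarith [pi_pos]) (by linarith)
    · rw [← cos_sub_two_pi]
      exact cos_nonneg_of_neg_pi_div_two_le_of_le (by linarith) (by linarith [pi_pos])

theorem abs_sgn_cos_mul_squareWave_sub_le (c : ℕ → ℝ) (d : ℕ) {θ : ℝ} (h₀ : 0 ≤ θ)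
    (h₁ : θ ≤ 2 * π) :
    |sgn (cos θ) * squareWave c d (π / 2) - squareWave c d (θ + π / 2)| ≤
      (∫ t in Set.Ioc |θ - π / 2| (π / 2), cos t * fejerPoly c d t) +
        ∫ t in Set.Ioc |θ - 3 * π / 2| (π / 2), cos t * fejerPoly c d t := by
  have hπ := pi_pos
  have nonneg : ∀ x : ℝ, 0 ≤ ∫ t in Set.Ioc |x| (π / 2), cos t * fejerPoly c d t := fun x ↦
    setIntegral_cos_mul_fejerPoly_nonneg c d (abs_nonneg x)
  have hsgn := sgn_cos_eq_ite h₀ h₁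
  rcases le_total θ π with hθ | hθ
  · have first_jump := abs_mul_squareWave_sub_squareWave (c := c) (d := d) (u := θ - π / 2)
      (ε := -sgn (cos θ)) (by rw [abs_neg, abs_sgn])
      (abs_le.2 ⟨by linarith, by linarith⟩) (by grind)
    have shift : squareWave c d (θ + π / 2) = -squareWave c d (θ - π / 2) := by
      rw [← squareWave_antiperiodic c d (θ - π / 2)]
      ring_nf
    rw [neg_mul, ← neg_add', abs_neg, ← sub_neg_eq_add, ← shift] at first_jump
    linarith [nonneg (θ - 3 * π / 2)]
  · have second_jump := abs_mul_squareWave_sub_squareWave (c := c) (d := d) (u := θ - 3 * π / 2)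
      (ε := sgn (cos θ)) (abs_sgn _) (abs_le.2 ⟨by linarith, by linarith⟩) (by grind)
    have shift : squareWave c d (θ + π / 2) = squareWave c d (θ - 3 * π / 2) := by
      rw [← (squareWave_antiperiodic c d).periodic_two_mul (θ - 3 * π / 2)]
      ring_nf
    rw [← shift] at second_jump
    linarith [nonneg (θ - π / 2)]

/-! ### Fejér's extremal weights -/

/-- The weights `c_i = sin ((i + 1) π / (d + 1))`, for which Fejér's extremal value
`A_1 / A_0 = cos (π / (d + 1))` of the ratio of autocorrelations is attained. -/
noncomputable def sineWeight (d i : ℕ) : ℝ := sin ((i + 1) * (π / (d + 1)))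

theorem sum_sin_mul_sin_sub (α : ℝ) (M : ℕ) :
    ∑ i ∈ range M, (sin ((i + 1) * α) * sin ((i + 1 + 1) * α) - cos α * sin ((i + 1) * α) ^ 2) =
      sin (M * α) * sin ((M + 1) * α) / 2 := by
  induction M with
  | zero => simp
  | succ M ih =>
    have next : sin (((M : ℝ) + 1 + 1) * α) =
        sin ((M + 1) * α) * cos α + cos ((M + 1) * α) * sin α := by
      rw [← sin_add]
      ring_nf
    have prev : sin ((M : ℝ) * α) = sin ((M + 1) * α) * cos α - cos ((M + 1) * α) * sin α := by
      rw [← sin_sub]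
      ring_nf
    rw [sum_range_succ, ih, Nat.cast_succ, next, prev]
    ring

theorem autocorr_sineWeight_one (d : ℕ) :
    autocorr (sineWeight d) d 1 = cos (π / (d + 1)) * autocorr (sineWeight d) d 0 := by
  have sineWeight_self : sineWeight d d = 0 := by
    rw [sineWeight, mul_div_cancel₀ _ (by positivity), sin_pi]
  have extend : autocorr (sineWeight d) d 1 =
      ∑ i ∈ range d, sineWeight d i * sineWeight d (i + 1) := by
    cases d with
    | zero => simp [autocorr]
    | succ d =>
      rw [sum_range_succ, sineWeight_self, mul_zero, add_zero, autocorr, Nat.add_sub_cancel]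
  have telescoped := sum_sin_mul_sin_sub (π / (d + 1)) d
  rw [← sineWeight, sineWeight_self, mul_zero, zero_div, sum_sub_distrib, ← mul_sum] at telescoped
  rw [extend, autocorr_zero_right, ← sub_eq_zero, ← telescoped]
  simp only [sineWeight, Nat.cast_succ]

theorem autocorr_sineWeight_zero_pos {d : ℕ} (hd : 0 < d) : 0 < autocorr (sineWeight d) d 0 := by
  rw [autocorr_zero_right]
  refine sum_pos (fun i hi ↦ pow_pos (sin_pos_of_pos_of_lt_pi (by positivity) ?_) 2) ⟨0, by simpa⟩
  have hi : (i : ℝ) < d := by exact_mod_cast mem_range.1 hi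
  rw [mul_div_left_comm, mul_lt_iff_lt_one_right pi_pos, div_lt_one (by positivity)]
  linarith

theorem pi_div_four_mul_autocorr_le_squareWave_sineWeight {d : ℕ} (hd : 0 < d) :
    π / 4 * autocorr (sineWeight d) d 0 ≤ squareWave (sineWeight d) d (π / 2) := by
  refine le_trans ?_ (pi_div_four_mul_le_squareWave (sineWeight d) d)
  have angle_le : π / (d + 1) ≤ π / 2 := by
    have : (1 : ℝ) ≤ d := by exact_mod_cast hd
    gcongr
    linarith
  have cos_nonneg : 0 ≤ cos (π / (d + 1)) :=
    cos_nonneg_of_neg_pi_div_two_le_of_le (by linarith [pi_pos, show 0 ≤ π / (d + 1) by positivity])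
      angle_le
  rw [autocorr_sineWeight_one]
  gcongr
  exact le_add_of_nonneg_right (mul_nonneg cos_nonneg (autocorr_sineWeight_zero_pos hd).le)

theorem squareWave_sineWeight_pos {d : ℕ} (hd : 0 < d) :
    0 < squareWave (sineWeight d) d (π / 2) :=
  (mul_pos (by positivity) (autocorr_sineWeight_zero_pos hd)).trans_le
    (pi_div_four_mul_autocorr_le_squareWave_sineWeight hd)

theorem sub_sin_le_mul_sin {φ : ℝ} (h₀ : 0 ≤ φ) (h₁ : φ ≤ π / 2) : φ - sin φ ≤ φ * sin φ := by
  have hsin : 0 ≤ sin φ := sin_nonneg_of_nonneg_of_le_pi h₀ (by linarith [pi_pos])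
  have hcos : 0 ≤ cos φ := cos_nonneg_of_neg_pi_div_two_le_of_le (by linarith [pi_pos]) h₁
  have mul_cos_le : φ * cos φ ≤ sin φ := by
    rcases h₁.lt_or_eq with h | rfl
    · rw [← le_div_iff₀ (cos_pos_of_mem_Ioo ⟨by linarith [pi_pos], h⟩), ← tan_eq_sin_div_cos]
      exact le_tan h₀ h
    · simp
  have one_le : 1 ≤ cos φ + sin φ := by nlinarith [sin_sq_add_cos_sq φ, mul_nonneg hsin hcos]
  nlinarith

theorem cos_two_mul_sub_cos_two_mul_div_le {x θ : ℝ} (hx₀ : 0 < x) (hx₁ : x ≤ π / 2)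
    (hθ₀ : 0 ≤ θ) (hθ₁ : θ ≤ π / 2) :
    (cos (2 * θ) - cos (2 * x)) / (4 * sin x) ≤ (x - θ) * cos θ := by
  have sin_pos : 0 < sin x := sin_pos_of_pos_of_lt_pi hx₀ (by linarith [pi_pos])
  have cos_sub : cos (2 * θ) - cos (2 * x) = 2 * sin (x + θ) * sin (x - θ) := by
    rw [two_mul_sin_mul_sin]
    ring_nf
  have expand : (x - θ) * cos θ * (4 * sin x) =
      2 * ((x - θ) * (sin (x + θ) + sin (x - θ))) := by
    rw [sin_add, sin_sub]
    ring
  rw [div_le_iff₀ (by positivity), cos_sub, expand]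
  have hS₀ : 0 ≤ sin (x + θ) := sin_nonneg_of_nonneg_of_le_pi (by linarith) (by linarith)
  have hS₁ : sin (x + θ) ≤ 1 := sin_le_one _
  rcases le_total θ x with h | h
  · have sin_nonneg : 0 ≤ sin (x - θ) :=
      sin_nonneg_of_nonneg_of_le_pi (by linarith) (by linarith)
    have sin_le : sin (x - θ) ≤ x - θ := sin_le (by linarith)
    nlinarith [mul_nonneg (sub_nonneg.2 h) sin_nonneg]
  · have sub_le := sub_sin_le_mul_sin (φ := θ - x) (by linarith) (by linarith)
    have sin_le : sin (θ - x) ≤ θ - x := sin_le (by linarith)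
    rw [← neg_sub, sin_neg]
    nlinarith

/-- The condition on `A_1 / A_0` makes `cos 2θ - cos 2x` orthogonal to the Fejér polynomial, so it
is enough to bound `θ cos θ` by `x cos θ` minus a multiple of `cos 2θ - cos 2x`. -/
theorem integral_mul_cos_mul_fejerPoly_le {c : ℕ → ℝ} {d : ℕ} {x : ℝ} (hx₀ : 0 < x)
    (hx₁ : x ≤ π / 2) (hc : autocorr c d 1 = cos (2 * x) * autocorr c d 0) :
    ∫ θ in (0 : ℝ)..(π / 2), θ * (cos θ * fejerPoly c d θ) ≤ x * squareWave c d (π / 2) := by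
  have h₀ := integral_cos_mul_fejerPoly c d 0
  have h₁ := integral_cos_mul_fejerPoly c d 1
  simp only [Nat.cast_zero, Nat.cast_one, mul_zero, mul_one, zero_mul, cos_zero, one_mul] at h₀ h₁
  have orthogonal : ∫ θ in (0 : ℝ)..(π / 2),
      (cos (2 * θ) * fejerPoly c d θ - cos (2 * x) * fejerPoly c d θ) / (4 * sin x) = 0 := by
    rw [intervalIntegral.integral_div, intervalIntegral.integral_sub
      (Continuous.intervalIntegrable (by fun_prop) _ _)
      (Continuous.intervalIntegrable (by fun_prop) _ _),
      intervalIntegral.integral_const_mul, h₀, h₁, hc]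
    ring
  have moment : ∫ θ in (0 : ℝ)..(π / 2), (x - θ) * (cos θ * fejerPoly c d θ) =
      x * squareWave c d (π / 2) - ∫ θ in (0 : ℝ)..(π / 2), θ * (cos θ * fejerPoly c d θ) := by
    simp only [sub_mul]
    rw [intervalIntegral.integral_sub
      (Continuous.intervalIntegrable (by fun_prop) _ _)
      (Continuous.intervalIntegrable (by fun_prop) _ _),
      intervalIntegral.integral_const_mul, integral_zero_pi_div_two_cos_mul_fejerPoly]
  have pointwise : ∀ θ ∈ Set.Icc 0 (π / 2),
      (cos (2 * θ) * fejerPoly c d θ - cos (2 * x) * fejerPoly c d θ) / (4 * sin x) ≤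
        (x - θ) * (cos θ * fejerPoly c d θ) := fun θ hθ ↦ by
    rw [← sub_mul, ← mul_assoc, mul_div_right_comm]
    exact mul_le_mul_of_nonneg_right (cos_two_mul_sub_cos_two_mul_div_le hx₀ hx₁ hθ.1 hθ.2)
      (fejerPoly_nonneg c d θ)
  have comparison := intervalIntegral.integral_mono_on (μ := MeasureTheory.volume)
    (by positivity) (Continuous.intervalIntegrable (by fun_prop) _ _)
    (Continuous.intervalIntegrable (by fun_prop) _ _) pointwise
  linarith

theorem sum_setIntegral_cos_mul_fejerPoly_le {c : ℕ → ℝ} {d n : ℕ} {x : ℝ} (hx₀ : 0 < x)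
    (hx₁ : x ≤ π / 2) (hc : autocorr c d 1 = cos (2 * x) * autocorr c d 0) (hn : 0 < n) (β : ℝ) :
    ∑ k ∈ range n, ∫ t in Set.Ioc |2 * π / n * k - β| (π / 2), cos t * fejerPoly c d t ≤
      (x * n / π + 1) * squareWave c d (π / 2) := by
  have integrable : IntervalIntegrable (fun t ↦ cos t * fejerPoly c d t) MeasureTheory.volume
      0 (π / 2) := Continuous.intervalIntegrable (by fun_prop) _ _
  calc _ ≤ ∫ t in (0 : ℝ)..(π / 2), (2 * t / (2 * π / n) + 1) * (cos t * fejerPoly c d t) :=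
        sum_setIntegral_Ioc_abs_mul_sub_le (by positivity) (by positivity) integrable
          (fun t ht ↦ cos_mul_fejerPoly_nonneg c d ht.1.le ht.2) n β
    _ = ∫ t in (0 : ℝ)..(π / 2),
          (n / π * (t * (cos t * fejerPoly c d t)) + cos t * fejerPoly c d t) := by
        congr 1 with t
        field_simp
    _ = n / π * (∫ t in (0 : ℝ)..(π / 2), t * (cos t * fejerPoly c d t)) +
          squareWave c d (π / 2) := by
        rw [intervalIntegral.integral_add (Continuous.intervalIntegrable (by fun_prop) _ _)
          integrable, intervalIntegral.integral_const_mul,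
          integral_zero_pi_div_two_cos_mul_fejerPoly]
    _ ≤ n / π * (x * squareWave c d (π / 2)) + squareWave c d (π / 2) := by
        gcongr
        exact integral_mul_cos_mul_fejerPoly_le hx₀ hx₁ hc
    _ = (x * n / π + 1) * squareWave c d (π / 2) := by ring

theorem sum_abs_sgn_cos_mul_squareWave_sub_le {c : ℕ → ℝ} {d n : ℕ} {x : ℝ} (hx₀ : 0 < x)
    (hx₁ : x ≤ π / 2) (hc : autocorr c d 1 = cos (2 * x) * autocorr c d 0) (hn : 0 < n) :
    ∑ k ∈ range n, |sgn (cos (2 * π / n * k)) * squareWave c d (π / 2) -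
      squareWave c d (2 * π / n * k + π / 2)| ≤
        (2 * x * n / π + 2) * squareWave c d (π / 2) := by
  have jump := sum_setIntegral_cos_mul_fejerPoly_le hx₀ hx₁ hc hn
  calc _ ≤ ∑ k ∈ range n,
        ((∫ t in Set.Ioc |2 * π / n * k - π / 2| (π / 2), cos t * fejerPoly c d t) +
          ∫ t in Set.Ioc |2 * π / n * k - 3 * π / 2| (π / 2), cos t * fejerPoly c d t) := by
        refine sum_le_sum fun k hk ↦ abs_sgn_cos_mul_squareWave_sub_le c d (by positivity) ?_
        have hk : (k : ℝ) ≤ n := by exact_mod_cast (mem_range.1 hk).le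
        rw [div_mul_eq_mul_div, div_le_iff₀ (by positivity)]
        gcongr
    _ ≤ (2 * x * n / π + 2) * squareWave c d (π / 2) := by
        rw [sum_add_distrib]
        refine (add_le_add (jump _) (jump _)).trans_eq ?_
        ring

/-! ### The square wave sampled on a grid -/

/-- The sequence `k ↦ sign (cos (2πk/n))`, the square wave sampled at the `n`-th division points of
the circle. -/
noncomputable def sgnCos (n k : ℕ) : ℝ := sgn (cos (2 * π / n * k))

theorem periodic_comp_two_pi_div_mul {α : Type*} {f : ℝ → α} (hf : Function.Periodic f (2 * π))
    {n : ℕ} (hn : n ≠ 0) : Function.Periodic (fun k : ℕ ↦ f (2 * π / n * k)) n := by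
  intro k
  have angle : 2 * π / n * (k + n : ℕ) = 2 * π / n * k + 2 * π := by
    push_cast
    field_simp
  simp only [angle, hf _]

theorem sgnCos_periodic {n : ℕ} (hn : n ≠ 0) : Function.Periodic (sgnCos n) n :=
  periodic_comp_two_pi_div_mul (cos_periodic.comp sgn) hn

theorem abs_sgnCos (n k : ℕ) : |sgnCos n k| = 1 := abs_sgn _

theorem sgnCos_eq_ite {n k : ℕ} (hk : k < n) :
    sgnCos n k = if n < 4 * k ∧ 4 * k < 3 * n then -1 else 1 := by
  have hn : (0 : ℝ) < n := by exact_mod_cast (Nat.zero_le k).trans_lt hk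
  have hk' : (k : ℝ) ≤ n := by exact_mod_cast hk.le
  have angle_le : 2 * π / n * k ≤ 2 * π := by
    rw [div_mul_eq_mul_div, div_le_iff₀ hn]
    gcongr
  have lower : π / 2 < 2 * π / n * k ↔ n < 4 * k := by
    rw [div_mul_eq_mul_div, lt_div_iff₀ hn, show 2 * π * k = π / 2 * (4 * k) by ring,
      mul_lt_mul_iff_right₀ (half_pos pi_pos)]
    exact_mod_cast Iff.rfl
  have upper : 2 * π / n * k < 3 * π / 2 ↔ 4 * k < 3 * n := by
    rw [div_mul_eq_mul_div, div_lt_iff₀ hn, show 2 * π * k = π / 2 * (4 * k) by ring,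
      show 3 * π / 2 * n = π / 2 * (3 * n) by ring, mul_lt_mul_iff_right₀ (half_pos pi_pos)]
    exact_mod_cast Iff.rfl
  rw [sgnCos, sgn_cos_eq_ite (by positivity) angle_le]
  simp only [lower, upper]

theorem sum_sgnCos_mul {n : ℕ} (f : ℕ → ℝ) :
    ∑ k ∈ range n, sgnCos n k * f k =
      ∑ k ∈ range n, f k - 2 * ∑ k ∈ Ico (n / 4 + 1) ((3 * n + 3) / 4), f k := by
  have negative : Ico (n / 4 + 1) ((3 * n + 3) / 4) =
      {k ∈ range n | n < 4 * k ∧ 4 * k < 3 * n} := by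
    ext k
    simp only [mem_Ico, mem_filter, mem_range]
    omega
  rw [negative, sum_filter, mul_sum, ← sum_sub_distrib]
  refine sum_congr rfl fun k hk ↦ ?_
  rw [sgnCos_eq_ite (mem_range.1 hk)]
  split_ifs <;> ring

theorem two_mul_sin_mul_sum_Ico_sin (ω φ : ℝ) {a b : ℕ} (hab : a ≤ b) :
    2 * sin (ω / 2) * ∑ k ∈ Ico a b, sin (ω * k + φ) =
      cos (ω * a + φ - ω / 2) - cos (ω * b + φ - ω / 2) := by
  rw [← neg_sub_neg, ← sum_Ico_sub (fun k : ℕ ↦ -cos (ω * k + φ - ω / 2)) hab, mul_sum]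
  refine sum_congr rfl fun k _ ↦ ?_
  rw [mul_right_comm, two_mul_sin_mul_sin, ← cos_neg]
  push_cast
  ring_nf

theorem abs_sin_mul_abs_sum_Ico_sin_le (ω φ : ℝ) {a b : ℕ} (hab : a ≤ b) :
    |sin (ω / 2)| * |∑ k ∈ Ico a b, sin (ω * k + φ)| ≤ 1 := by
  have telescoped := congrArg abs (two_mul_sin_mul_sum_Ico_sin ω φ hab)
  rw [abs_mul, abs_mul, abs_two] at telescoped
  linarith [abs_sub (cos (ω * a + φ - ω / 2)) (cos (ω * b + φ - ω / 2)),
    abs_cos_le_one (ω * a + φ - ω / 2), abs_cos_le_one (ω * b + φ - ω / 2)]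

theorem sum_range_sin_eq_zero {ω : ℝ} {n N : ℕ} (hω : ω * n = N * (2 * π))
    (hsin : sin (ω / 2) ≠ 0) (φ : ℝ) : ∑ k ∈ range n, sin (ω * k + φ) = 0 := by
  have telescoped := two_mul_sin_mul_sum_Ico_sin ω φ n.zero_le
  have period : ω * n + φ - ω / 2 = φ - ω / 2 + N * (2 * π) := by
    rw [hω]
    ring
  rw [period, cos_add_nat_mul_two_pi, Nat.cast_zero, mul_zero, zero_add, sub_self,
    ← range_eq_Ico] at telescoped
  simpa [hsin] using telescoped

theorem tdist_pos {n N : ℕ} (hn : 0 < n) (hN : ¬n ∣ N) : 0 < tdist n N :=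
  lt_min (Nat.pos_of_ne_zero fun h ↦ hN (Nat.dvd_of_mod_eq_zero h))
    (Nat.sub_pos_of_lt (N.mod_lt hn))

theorem exists_abs_sub_mul_eq_tdist {n : ℕ} (hn : 0 < n) (N : ℕ) :
    ∃ q : ℤ, |(N : ℤ) - n * q| = tdist n N := by
  have mod_le : ((N % n : ℕ) : ℤ) ≤ n := by exact_mod_cast (N.mod_lt hn).le
  have div_add_mod : (n : ℤ) * (N / n : ℕ) + (N % n : ℕ) = N := by
    exact_mod_cast Nat.div_add_mod N n
  rcases le_total (N % n) (n - N % n) with h | h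
  · refine ⟨(N / n : ℕ), ?_⟩
    rw [tdist, min_eq_left h, ← div_add_mod, add_sub_cancel_left, Nat.abs_cast]
  · refine ⟨(N / n : ℕ) + 1, ?_⟩
    rw [tdist, min_eq_right h, Nat.cast_sub (N.mod_lt hn).le, ← abs_neg, abs_of_nonneg] <;> linarith

theorem two_mul_tdist_le {n : ℕ} (hn : 0 < n) (N : ℕ) : 2 * tdist n N ≤ n := by
  have := N.mod_lt hn
  unfold tdist
  omega

theorem two_mul_tdist_div_le_abs_sin (n N : ℕ) :
    2 * (tdist n N / n : ℝ) ≤ |sin (π * N / n)| := by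
  rcases n.eq_zero_or_pos with rfl | hn
  · simp
  obtain ⟨q, hq⟩ := exists_abs_sub_mul_eq_tdist hn N
  have hq : |(N : ℝ) - n * q| = tdist n N := by exact_mod_cast hq
  have abs_angle : |π * (N - n * q) / n| = π * (tdist n N / n) := by
    rw [abs_div, abs_mul, hq, abs_of_pos pi_pos, Nat.abs_cast, mul_div_assoc]
  have tdist_div_le : (tdist n N / n : ℝ) ≤ 1 / 2 := by
    rw [div_le_div_iff₀ (by positivity) two_pos]
    exact_mod_cast (mul_comm _ _).trans_le ((two_mul_tdist_le hn N).trans_eq (one_mul n).symm)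
  calc 2 * (tdist n N / n : ℝ) = 2 / π * |π * (N - n * q) / n| := by
        rw [abs_angle]
        field_simp
    _ ≤ |sin (π * (N - n * q) / n)| := mul_abs_le_abs_sin (by rw [abs_angle]; nlinarith [pi_pos])
    _ = |sin (π * N / n)| := by
        rw [show π * (N - n * q) / n = π * N / n - q * π by field_simp, sin_sub_int_mul_pi,
          abs_mul, abs_neg_one_zpow, one_mul]

theorem abs_sum_sgnCos_mul_sin_le {n N : ℕ} (hN : ¬n ∣ N) (φ : ℝ) :
    |∑ k ∈ range n, sgnCos n k * sin (2 * π / n * N * k + φ)| ≤ n / tdist n N := by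
  rcases n.eq_zero_or_pos with rfl | hn
  · simp
  have htdist : (0 : ℝ) < tdist n N := by exact_mod_cast tdist_pos hn hN
  have le_sin := two_mul_tdist_div_le_abs_sin n N
  rw [show π * N / n = 2 * π / n * N / 2 by ring] at le_sin
  have sin_pos : 0 < |sin (2 * π / n * N / 2)| := lt_of_lt_of_le (by positivity) le_sin
  have full_period : ∑ k ∈ range n, sin (2 * π / n * N * k + φ) = 0 :=
    sum_range_sin_eq_zero (N := N) (by field_simp) (abs_pos.1 sin_pos) φ
  rw [sum_sgnCos_mul, full_period, zero_sub, abs_neg, abs_mul, abs_two]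
  set S := |∑ k ∈ Ico (n / 4 + 1) ((3 * n + 3) / 4), sin (2 * π / n * N * k + φ)|
  have block : 2 * (tdist n N / n : ℝ) * S ≤ 1 :=
    (mul_le_mul_of_nonneg_right le_sin (abs_nonneg _)).trans
      (abs_sin_mul_abs_sum_Ico_sin_le _ φ (by omega))
  rw [le_div_iff₀ htdist]
  calc 2 * S * tdist n N = 2 * (tdist n N / n : ℝ) * S * n := by field_simp
    _ ≤ n := mul_le_of_le_one_left n.cast_nonneg block

theorem abs_sum_sgnCos_mul_squareWave_le (c : ℕ → ℝ) {d n N : ℕ} (hN : N.Coprime n)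
    (hd : 2 * d ≤ n) :
    |∑ k ∈ range n, sgnCos n k * squareWave c d (2 * π / n * (N * k : ℕ) + π / 2)| ≤
      2 * autocorr c d 0 *
        ∑ r ∈ range d, n / (((2 * r + 1 : ℕ) : ℝ) * tdist n ((2 * r + 1) * N)) := by
  have by_frequency :
      ∑ k ∈ range n, sgnCos n k * squareWave c d (2 * π / n * (N * k : ℕ) + π / 2) =
        ∑ r ∈ range d, (autocorr c d r + autocorr c d (r + 1)) / (2 * r + 1 : ℕ) *
          ∑ k ∈ range n, sgnCos n k *
            sin (2 * π / n * ((2 * r + 1) * N : ℕ) * k + (2 * r + 1) * (π / 2)) := by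
    simp only [squareWave, mul_sum]
    rw [sum_comm]
    refine sum_congr rfl fun r _ ↦ sum_congr rfl fun k _ ↦ ?_
    push_cast
    ring_nf
  rw [by_frequency, mul_sum]
  refine (abs_sum_le_sum_abs _ _).trans (sum_le_sum fun r hr ↦ ?_)
  have not_dvd : ¬n ∣ (2 * r + 1) * N := fun h ↦ by
    have := Nat.le_of_dvd (by omega) (hN.symm.dvd_of_dvd_mul_right h)
    have := mem_range.1 hr
    omega
  have coeff_le : |autocorr c d r + autocorr c d (r + 1)| ≤ 2 * autocorr c d 0 := by
    linarith [abs_add_le (autocorr c d r) (autocorr c d (r + 1)), abs_autocorr_le c d r,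
      abs_autocorr_le c d (r + 1)]
  rw [abs_mul, abs_div, Nat.abs_cast]
  refine (mul_le_mul (div_le_div_of_nonneg_right coeff_le (Nat.cast_nonneg _))
    (abs_sum_sgnCos_mul_sin_le not_dvd _) (abs_nonneg _) ?_).trans_eq (by ring)
  exact div_nonneg ((abs_nonneg _).trans coeff_le) (Nat.cast_nonneg _)

theorem sum_abs_sgnCos_mul_squareWave_sub_le {c : ℕ → ℝ} {d n N : ℕ} {x : ℝ} (hx₀ : 0 < x)
    (hx₁ : x ≤ π / 2) (hc : autocorr c d 1 = cos (2 * x) * autocorr c d 0) (hn : 0 < n)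
    (hN : N.Coprime n) :
    ∑ k ∈ range n, |sgnCos n (N * k) * squareWave c d (π / 2) -
      squareWave c d (2 * π / n * (N * k : ℕ) + π / 2)| ≤
        (2 * x * n / π + 2) * squareWave c d (π / 2) := by
  have error_periodic : Function.Periodic (fun θ ↦ |sgn (cos θ) * squareWave c d (π / 2) -
      squareWave c d (θ + π / 2)|) (2 * π) := fun θ ↦ by
    simp only [cos_add_two_pi, add_right_comm θ (2 * π),
      (squareWave_antiperiodic c d).periodic_two_mul (θ + π / 2)]
  have permuted := sum_Ico_mul_of_periodic
    (periodic_comp_two_pi_div_mul error_periodic hn.ne') hN 0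
  rw [zero_add, ← range_eq_Ico] at permuted
  exact permuted.trans_le (sum_abs_sgn_cos_mul_squareWave_sub_le hx₀ hx₁ hc hn)

theorem sum_abs_sgnCos_mul_squareWave_sineWeight_sub_le (d : ℕ) {n N : ℕ} (hn : 0 < n)
    (hN : N.Coprime n) :
    ∑ k ∈ range n, |sgnCos n (N * k) * squareWave (sineWeight d) d (π / 2) -
      squareWave (sineWeight d) d (2 * π / n * (N * k : ℕ) + π / 2)| ≤
        (n / (d + 1) + 2) * squareWave (sineWeight d) d (π / 2) := by
  set x : ℝ := π / (2 * (d + 1)) with hx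
  have x_le : x ≤ π / 2 := by
    refine div_le_div_of_nonneg_left pi_pos.le two_pos ?_
    linarith [d.cast_nonneg (α := ℝ)]
  have hc : autocorr (sineWeight d) d 1 = cos (2 * x) * autocorr (sineWeight d) d 0 := by
    rw [autocorr_sineWeight_one, show 2 * x = π / (d + 1) by rw [hx]; field_simp]
  refine (sum_abs_sgnCos_mul_squareWave_sub_le (by positivity) x_le hc hn hN).trans_eq ?_
  rw [hx]
  field_simp

theorem abs_sum_sgnCos_mul_sgnCos_mul_le {d n N : ℕ} (hN : N.Coprime n) (hd : 0 < d)
    (hdn : 2 * d ≤ n) :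
    |∑ k ∈ range n, sgnCos n k * sgnCos n (N * k)| ≤ n / (d + 1) + 2 +
      8 / π * ∑ r ∈ range d, n / (((2 * r + 1 : ℕ) : ℝ) * tdist n ((2 * r + 1) * N)) := by
  set c := sineWeight d
  set Z := squareWave c d (π / 2)
  set T := ∑ r ∈ range d, n / (((2 * r + 1 : ℕ) : ℝ) * tdist n ((2 * r + 1) * N))
  let W : ℕ → ℝ := fun k ↦ squareWave c d (2 * π / n * (N * k : ℕ) + π / 2)
  have hZ : 0 < Z := squareWave_sineWeight_pos hd
  have error_le : |∑ k ∈ range n, sgnCos n k * (sgnCos n (N * k) * Z - W k)| ≤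
      (n / (d + 1) + 2) * Z := by
    refine (abs_sum_le_sum_abs _ _).trans ?_
    simp only [abs_mul, abs_sgnCos, one_mul]
    exact sum_abs_sgnCos_mul_squareWave_sineWeight_sub_le d (by omega) hN
  have main_le : |∑ k ∈ range n, sgnCos n k * W k| ≤ 8 / π * T * Z := calc
    _ ≤ 2 * autocorr c d 0 * T := abs_sum_sgnCos_mul_squareWave_le c hN hdn
    _ = 8 / π * T * (π / 4 * autocorr c d 0) := by
      field_simp
      ring
    _ ≤ 8 / π * T * Z := by
      gcongr
      exact pi_div_four_mul_autocorr_le_squareWave_sineWeight hd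
  refine le_of_mul_le_mul_right ?_ hZ
  calc |∑ k ∈ range n, sgnCos n k * sgnCos n (N * k)| * Z
      = |(∑ k ∈ range n, sgnCos n k * sgnCos n (N * k)) * Z| := by rw [abs_mul, abs_of_pos hZ]
    _ = |∑ k ∈ range n, sgnCos n k * (sgnCos n (N * k) * Z - W k) +
          ∑ k ∈ range n, sgnCos n k * W k| := by
        rw [sum_mul, ← sum_add_distrib]
        congr! 2 with k
        ring
    _ ≤ (n / (d + 1) + 2) * Z + 8 / π * T * Z :=
        (abs_add_le _ _).trans (add_le_add error_le main_le)
    _ = (n / (d + 1) + 2 + 8 / π * T) * Z := by ring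

theorem sum_Icc_sgnCos_mul_sgnCos {n a b N : ℕ} (hn : n ≠ 0) (ha : a.Coprime n)
    (hN : a * N ≡ b [MOD n]) :
    ∑ k ∈ Icc 1 n, sgnCos n (a * k) * sgnCos n (b * k) =
      ∑ k ∈ range n, sgnCos n k * sgnCos n (N * k) := by
  have periodic : Function.Periodic (fun k ↦ sgnCos n k * sgnCos n (N * k)) n := fun k ↦ by
    have shift : sgnCos n (N * k + N * n) = sgnCos n (N * k) := (sgnCos_periodic hn).nsmul N _
    simp only [mul_add, sgnCos_periodic hn k, shift]
  rw [← sum_Ico_mul_of_periodic periodic ha 1, add_comm 1 n]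
  refine sum_congr (by ext; simp) fun k _ ↦ ?_
  have same_residue : b * k ≡ N * (a * k) [MOD n] := by
    rw [mul_left_comm, ← mul_assoc]
    exact hN.symm.mul_right k
  have value_eq : sgnCos n (b * k) = sgnCos n (N * (a * k)) := by
    rw [← (sgnCos_periodic hn).map_mod_nat, same_residue, (sgnCos_periodic hn).map_mod_nat]
  rw [value_eq]

theorem sgn_cos_eq_sgnCos (n a k : ℕ) : sgn (cos (2 * π * a * k / n)) = sgnCos n (a * k) := by
  rw [sgnCos]
  push_cast
  ring_nf

theorem mul_val_inv_mul_modEq {n a : ℕ} [NeZero n] (ha : a.Coprime n) (b : ℕ) :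
    a * ((a : ZMod n)⁻¹ * (b : ZMod n)).val ≡ b [MOD n] := by
  rw [← ZMod.natCast_eq_natCast_iff, Nat.cast_mul, ZMod.natCast_zmod_val, ← mul_assoc,
    ZMod.coe_mul_inv_eq_one a ha, one_mul]

theorem stmt16_general {n a b m : ℕ} (ha : a.Coprime n) (hb : b.Coprime n) (hm : 1 ≤ m)
    (hmn : m < n) :
    |∑ k ∈ Icc 1 n, sgn (cos (2 * π * a * k / n)) * sgn (cos (2 * π * b * k / n))| ≤
      (2 / ((m : ℝ) + 2) +
        ∑ ℓ ∈ Icc 1 m,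
          12 / ((ℓ : ℝ) * (tdist n (ℓ * ((a : ZMod n)⁻¹ * (b : ZMod n)).val) : ℝ))) * n + 2 := by
  have : NeZero n := ⟨by omega⟩
  set N := ((a : ZMod n)⁻¹ * (b : ZMod n)).val
  let F : ℕ → ℝ := fun ℓ ↦ n / ((ℓ : ℝ) * tdist n (ℓ * N))
  have mul_modEq : a * N ≡ b [MOD n] := mul_val_inv_mul_modEq ha b
  have hN : N.Coprime n :=
    Nat.Coprime.coprime_mul_left (k := a) (by rwa [Nat.Coprime, mul_modEq.gcd_eq])
  let d := (m + 1) / 2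
  calc _ = |∑ k ∈ range n, sgnCos n k * sgnCos n (N * k)| := by
        simp only [sgn_cos_eq_sgnCos, sum_Icc_sgnCos_mul_sgnCos (NeZero.ne n) ha mul_modEq]
    _ ≤ n / (d + 1) + 2 + 8 / π * ∑ r ∈ range d, F (2 * r + 1) :=
        abs_sum_sgnCos_mul_sgnCos_mul_le hN (by omega) (by omega)
    _ ≤ 2 / (m + 2) * n + 2 + 12 * ∑ ℓ ∈ Icc 1 m, F ℓ := by
        gcongr
        · have hd : (m + 2 : ℝ) ≤ 2 * (d + 1) := by exact_mod_cast (by omega : m + 2 ≤ 2 * (d + 1))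
          rw [div_mul_eq_mul_div, div_le_div_iff₀ (by positivity) (by positivity)]
          nlinarith [n.cast_nonneg (α := ℝ)]
        · rw [div_le_iff₀ pi_pos]
          linarith [pi_gt_three]
        · exact sum_range_odd_le (fun ℓ ↦ by positivity) (by omega)
    _ = _ := by
        rw [add_mul, sum_mul, mul_sum, add_right_comm]
        congr 2
        refine sum_congr rfl fun ℓ _ ↦ ?_
        ring

theorem stmt16 :
    ∃ C : ℝ, 0 < C ∧
      ∀ (n : ℕ), n.Prime → Odd n → ∀ (a b : ℕ), 1 ≤ a → a ≤ n - 1 → 1 ≤ b → b ≤ n - 1 →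
        ∀ (m : ℕ), 1 ≤ m → m < n →
          |∑ k ∈ Finset.Icc 1 n,
              sgn (Real.cos (2 * π * a * k / n)) * sgn (Real.cos (2 * π * b * k / n))| ≤
            (2 / ((m : ℝ) + 2) +
              ∑ ℓ ∈ Finset.Icc 1 m,
                12 / ((ℓ : ℝ) * (tdist n (ℓ * ((a : ZMod n)⁻¹ * (b : ZMod n)).val) : ℝ))) * n
            + C := by
  refine ⟨2, two_pos, fun n hn _ a b ha ha' hb hb' m hm hmn ↦ ?_⟩
  have coprime : ∀ c, 1 ≤ c → c ≤ n - 1 → c.Coprime n := fun c hc hc' ↦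
    (Nat.coprime_of_lt_prime (by omega) (by omega) hn).symm
  exact stmt16_general (coprime a ha ha') (coprime b hb hb') hm hmn
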